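/- arXiv:2211.16842 — 2 statements merged into one kernel-verified Lean document; each statement's English description precedes it below -/
import Mathlib

section
/- Let n ≥ 2 and define Q_{n−1}(x₁,…,x_{n−1}) = ∏_{1 ≤ i ≤ j ≤ n−1} (1 − ∏_{k=i}^{j} x_k). Then for all (x₁,…,x_{n−1}) ∈ [−1,1]^{n−1} one has Q_{n−1}(x) ≤ 2^(⌊n/2⌋), and equality holds at the point x* given by x*_i = −1 for i odd and x*_i = 0 for i even. Consequently 2^(⌊n/2⌋) is the maximum of Q_{n−1} on [−1,1]^{n−1}. -/
open Finset

/-- `Q m x = ∏_{1 ≤ i ≤ j ≤ m} (1 − xᵢ x_{i+1} ⋯ xⱼ)` (indices written here zero-based). -/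
noncomputable def Q (m : ℕ) (x : Fin m → ℝ) : ℝ :=
  ∏ p ∈ Finset.univ.filter (fun p : Fin m × Fin m => p.1 ≤ p.2),
    (1 - ∏ k ∈ Finset.Icc p.1 p.2, x k)

/-- The product of `f a b` over all pairs of entries of a list with `a` occurring before `b`. -/
def pairProd (f : ℕ → ℕ → ℝ) : List ℕ → ℝ
  | [] => 1
  | a :: l => (l.map (f a)).prod * pairProd f l

lemma pairProd_remove_one (f : ℕ → ℕ → ℝ) (L : List ℕ) (a : ℕ) :
    pairProd f (L ++ [a]) = pairProd f L * (L.map (fun k => f k a)).prod := by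
  induction L with
  | nil => simp [pairProd]
  | cons h t ih =>
    simp only [List.cons_append, pairProd, ih, List.map_append, List.prod_append, List.map_cons,
      List.prod_cons, List.map_nil, List.prod_nil]
    ring

lemma pairProd_remove_two (f : ℕ → ℕ → ℝ) (L R : List ℕ) (a b : ℕ) :
    pairProd f (L ++ a :: b :: R) = pairProd f (L ++ R) * (L.map (fun k => f k a * f k b)).prod *
      (f a b * (R.map (fun k => f a k * f b k)).prod) := by
  induction L with
  | nil =>
    simp only [List.nil_append, pairProd, List.map_cons, List.prod_cons, List.prod_map_mul,
      List.map_nil, List.prod_nil]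
    ring
  | cons h t ih =>
    simp only [List.cons_append, pairProd, ih, List.map_append, List.prod_append, List.map_cons,
      List.prod_cons]
    ring

lemma pairProd_nonneg {f : ℕ → ℕ → ℝ} :
    ∀ {l : List ℕ}, l.Pairwise (fun a b => 0 ≤ f a b) → 0 ≤ pairProd f l
  | [], _ => zero_le_one
  | a :: l, h => by
    rw [List.pairwise_cons] at h
    refine mul_nonneg (List.prod_nonneg ?_) (pairProd_nonneg h.2)
    intro y hy
    obtain ⟨b, hb, rfl⟩ := List.mem_map.1 hy
    exact h.1 b hb

lemma list_prod_le_one {G : List ℝ} (h : ∀ v ∈ G, 0 ≤ v ∧ v ≤ 1) : G.prod ≤ 1 := by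
  induction G with
  | nil => simp
  | cons v G ih =>
    rw [List.prod_cons]
    have h1 := h v (by simp)
    have h2 : ∀ w ∈ G, 0 ≤ w ∧ w ≤ 1 := fun w hw => h w (by simp [hw])
    exact mul_le_one₀ h1.2 (List.prod_nonneg fun w hw => (h2 w hw).1) (ih h2)

/-- If every entry of sign `-1` can be cancelled against an earlier entry of sign `1`
or against a factor in `G`, then the whole product is at most `1`. -/
lemma ballot_prod_le_one (t : ℕ → ℤ) (g : ℕ → ℝ) (R : List ℕ) :
    ∀ G : List ℝ, (∀ v ∈ G, 0 ≤ v ∧ v ≤ 1) →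
      (∀ v ∈ G, ∀ b ∈ R, t b = -1 → v * g b ≤ 1) →
      (∀ b ∈ R, 0 ≤ g b ∧ (t b = 1 ∧ g b ≤ 1 ∨ t b = -1)) →
      R.Pairwise (fun a b => t a = 1 → t b = -1 → g a * g b ≤ 1) →
      (∀ p, p <+: R → 0 ≤ (G.length : ℤ) + (p.map t).sum) →
      G.prod * (R.map g).prod ≤ 1 := by
  induction R with
  | nil =>
    intro G hG _ _ _ _
    simpa using list_prod_le_one hG
  | cons b R ih =>
    intro G hG hGR hR hp hs
    rw [List.pairwise_cons] at hp
    have hR' : ∀ c ∈ R, 0 ≤ g c ∧ (t c = 1 ∧ g c ≤ 1 ∨ t c = -1) :=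
      fun c hc => hR c (by simp [hc])
    have hs' : ∀ p, p <+: R → 0 ≤ (G.length : ℤ) + (t b + (p.map t).sum) := by
      intro p hpR
      simpa using hs (b :: p) (by simpa using hpR)
    obtain ⟨hb0, ⟨hb, hb1⟩ | hb⟩ := hR b (by simp)
    · have := ih (g b :: G) (by simpa using ⟨⟨hb0, hb1⟩, hG⟩)
        (by
          intro v hv c hc htc
          rcases List.mem_cons.1 hv with rfl | hv
          · exact hp.1 c hc hb htc
          · exact hGR v hv c (by simp [hc]) htc) hR' hp.2
        (by
          intro p hpR
          have := hs' p hpR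
          simp only [List.length_cons]
          push_cast
          lia)
      simp only [List.map_cons, List.prod_cons] at this ⊢
      linarith
    · cases G with
      | nil =>
        have := hs' [] (by simp)
        simp [hb] at this
      | cons v G =>
        have := ih G (fun w hw => hG w (by simp [hw]))
          (fun w hw c hc => hGR w (by simp [hw]) c (by simp [hc])) hR' hp.2
          (by
            intro p hpR
            have := hs' p hpR
            simp only [List.length_cons] at this
            push_cast at this
            lia)
        have h1 : v * g b ≤ 1 := hGR v (by simp) b (by simp) hb
        have h0 : 0 ≤ G.prod * (R.map g).prod := by
          refine mul_nonneg (List.prod_nonneg fun w hw => (hG w (by simp [hw])).1)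
            (List.prod_nonneg fun w hw => ?_)
          obtain ⟨c, hc, rfl⟩ := List.mem_map.1 hw
          exact (hR' c hc).1
        simp only [List.map_cons, List.prod_cons]
        calc v * G.prod * (g b * (R.map g).prod) = v * g b * (G.prod * (R.map g).prod) := by ring
          _ ≤ 1 := mul_le_one₀ h1 h0 this

lemma four_factor_le_one {x u v : ℝ} (hx0 : 0 ≤ x) (hx1 : x ≤ 1) (hv : 0 ≤ v) (huv : v ≤ u)
    (hu : u ≤ 1) : (1 - u) * (1 + u * x) * ((1 + v) * (1 - v * x)) ≤ 1 := by
  have h1 : 0 ≤ (1 - u) * (1 - v * x) :=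
    mul_nonneg (by linarith) (by nlinarith)
  have h2 : (1 + u * x) * (1 + v) ≤ (1 + u) * (1 + v * x) := by
    nlinarith [mul_nonneg (sub_nonneg.2 hx1) (sub_nonneg.2 huv)]
  have h3 : v * x ≤ 1 := by nlinarith
  have h4 : 0 ≤ v * x := mul_nonneg hv hx0
  have h5 : (1 - u ^ 2) * (1 - (v * x) ^ 2) ≤ 1 :=
    mul_le_one₀ (by nlinarith) (by nlinarith) (by nlinarith)
  nlinarith [mul_le_mul_of_nonneg_left h2 h1]

lemma three_factor_le_two {x u : ℝ} (hx0 : 0 ≤ x) (hx1 : x ≤ 1) (hu0 : 0 ≤ u) (hu1 : u ≤ 1) :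
    (1 + x) * ((1 + u) * (1 - u * x)) ≤ 2 := by
  have h : 0 ≤ u * x := mul_nonneg hu0 hx0
  have h1 : (1 + x) * (1 + u) ≤ 2 * (1 + u * x) := by
    nlinarith [mul_nonneg (sub_nonneg.2 hx1) (sub_nonneg.2 hu1)]
  have h2 : u * x ≤ 1 := by nlinarith
  nlinarith [mul_le_mul_of_nonneg_right h1 (sub_nonneg.2 h2), mul_nonneg h h]

lemma ballot_weights_le_one {x : ℝ} (hx0 : 0 ≤ x) (hx1 : x ≤ 1) (t : ℕ → ℤ)
    (ht : ∀ k, t k = 1 ∨ t k = -1) (u : ℕ → ℝ) (R : List ℕ)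
    (hu : ∀ k ∈ R, 0 ≤ u k ∧ u k ≤ 1) (hR : R.Pairwise (fun a b => u b ≤ u a)) (G : List ℝ)
    (hG : ∀ v ∈ G, 0 ≤ v ∧ v ≤ 1)
    (hGR : ∀ v ∈ G, ∀ b ∈ R, v * ((1 + u b) * (1 - u b * x)) ≤ 1)
    (hs : ∀ p, p <+: R → 0 ≤ (G.length : ℤ) + (p.map t).sum) :
    G.prod * (R.map (fun k => (1 - t k * u k) * (1 + t k * (u k * x)))).prod ≤ 1 := by
  refine ballot_prod_le_one t _ R G hG ?_ ?_ ?_ hs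
  · intro v hv b hb htb
    have := hGR v hv b hb
    simp only [htb]
    push_cast
    convert this using 2
    ring
  · intro b hb
    obtain ⟨h0, h1⟩ := hu b hb
    have h2 : 0 ≤ u b * x := mul_nonneg h0 hx0
    have h3 : u b * x ≤ u b := mul_le_of_le_one_right h0 hx1
    rcases ht b with h | h
    · simp only [h]
      push_cast
      refine ⟨mul_nonneg (by linarith) (by linarith), Or.inl ⟨trivial, ?_⟩⟩
      nlinarith
    · simp only [h]
      push_cast
      exact ⟨mul_nonneg (by linarith) (by linarith), Or.inr trivial⟩
  · refine (List.Pairwise.and_mem.1 hR).imp ?_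
    rintro a b ⟨ha, hb, hab⟩ hta htb
    have := four_factor_le_one hx0 hx1 (hu b hb).1 hab (hu a ha).2
    simp only [hta, htb]
    push_cast
    convert this using 1
    ring

/-- Splitting a sign sequence at the first maximum of its partial sums. -/
lemma exists_split_at_max (t : ℕ → ℤ) (ht : ∀ k, t k = 1 ∨ t k = -1) (l : List ℕ) :
    (∀ p, p <+: l → (p.map t).sum ≤ 0) ∨
    ∃ L a R, l = L ++ a :: R ∧ t a = 1 ∧
      (∀ p, p <+: L.reverse → 0 ≤ (p.map t).sum) ∧
      (∀ p, p <+: R → (p.map t).sum ≤ 0) ∧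
      ∀ p, p <+: l → (p.map t).sum ≤ (L.map t).sum + 1 := by
  induction l with
  | nil => left; simp
  | cons h l ih =>
    rcases ih with ih | ⟨L, a, R, rfl, ha, hL, hR, hl⟩
    · rcases ht h with hh | hh
      · right
        refine ⟨[], h, l, rfl, hh, by simp, ih, ?_⟩
        intro p hp
        rcases List.prefix_cons_iff.1 hp with rfl | ⟨q, rfl, hq⟩
        · simp
        · have := ih q hq
          simp [hh]
          lia
      · left
        intro p hp
        rcases List.prefix_cons_iff.1 hp with rfl | ⟨q, rfl, hq⟩
        · simp
        · have := ih q hq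
          simp [hh]
          lia
    · have hL0 : 0 ≤ (L.map t).sum := by
        have := hL L.reverse List.prefix_rfl
        rwa [List.map_reverse, List.sum_reverse] at this
      by_cases hc : 0 ≤ t h + (L.map t).sum
      · right
        refine ⟨h :: L, a, R, rfl, ha, ?_, hR, ?_⟩
        · intro p hp
          rw [List.reverse_cons, List.prefix_concat_iff] at hp
          rcases hp with rfl | hp
          · simp only [List.map_append, List.map_reverse, List.sum_append, List.sum_reverse]
            simp
            lia
          · exact hL p hp
        · intro p hp
          rcases List.prefix_cons_iff.1 hp with rfl | ⟨q, rfl, hq⟩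
          · simp
            lia
          · have := hl q hq
            simp
            lia
      · left
        intro p hp
        rcases List.prefix_cons_iff.1 hp with rfl | ⟨q, rfl, hq⟩
        · simp
        · have := hl q hq
          have := ht h
          simp
          lia

section
variable {s : ℕ → ℤ} {r : ℕ → ℕ → ℝ}

lemma sign_factor_nonneg (hs : ∀ k, s k = 1 ∨ s k = -1) (hr1 : ∀ i j, r i j ≤ 1)
    (hr0 : ∀ i j, 0 ≤ r i j) (i j : ℕ) : 0 ≤ 1 - s i * s j * r i j := by
  have := hr1 i j
  have := hr0 i j
  rcases hs i with h | h <;> rcases hs j with h' | h' <;> simp only [h, h'] <;> push_cast <;>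
    linarith

lemma pairProd_sign_le (hs : ∀ k, s k = 1 ∨ s k = -1) (hr1 : ∀ i j, r i j ≤ 1)
    (hr0 : ∀ i j, 0 ≤ r i j) (hr : ∀ i j k, i < j → j < k → r i k = r i j * r j k) (n : ℕ) :
    ∀ l : List ℕ, l.length = n → l.Pairwise (· < ·) →
      pairProd (fun i j => 1 - s i * s j * r i j) l ≤ 2 ^ (n / 2) := by
  induction n using Nat.strong_induction_on with
  | _ n ih =>
  intro l hln hl
  have hnonneg : ∀ l : List ℕ, 0 ≤ pairProd (fun i j => 1 - s i * s j * r i j) l := fun l =>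
    pairProd_nonneg (List.pairwise_iff_forall_sublist.2 fun _ => sign_factor_nonneg hs hr1 hr0 _ _)
  rcases l with _ | ⟨h, l⟩
  · subst hln
    simp [pairProd]
  have hss : s h * s h = 1 := by rcases hs h with h | h <;> simp [h]
  rcases exists_split_at_max (fun k => s h * s k)
    (fun k => by rcases hs h with h | h <;> rcases hs k with h' | h' <;> simp [h, h']) (h :: l)
    with hmax | ⟨L, a, R, hsplit, ha, hL, hR, -⟩
  · have := hmax [h] (by simp)
    simp [hss] at this
  have hsa : s a = s h := by
    rcases hs h with h | h <;> rcases hs a with h' | h' <;> simp [h, h'] at ha ⊢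
  rw [hsplit] at hl hln ⊢
  clear hsplit
  have ht : ∀ k, s a * s k = 1 ∨ s a * s k = -1 := fun k => by
    rcases hs a with h | h <;> rcases hs k with h' | h' <;> simp [h, h']
  rw [← hsa] at hL hR
  rw [List.pairwise_append] at hl
  obtain ⟨hLp, haR, hLaR⟩ := hl
  have hanti : L.reverse.Pairwise (fun i j => r j a ≤ r i a) := by
    rw [List.pairwise_reverse]
    refine (List.Pairwise.and_mem.1 hLp).imp ?_
    rintro i j ⟨hi, hj, hij⟩
    rw [hr i j a hij (hLaR j hj a (by simp))]
    exact mul_le_of_le_one_left (hr0 _ _) (hr1 _ _)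
  have hleft : ∀ x : ℝ, 0 ≤ x → x ≤ 1 →
      (L.map (fun k => (1 - (s a * s k : ℤ) * r k a) *
        (1 + (s a * s k : ℤ) * (r k a * x)))).prod ≤ 1 := by
    intro x hx0 hx1
    have := ballot_weights_le_one hx0 hx1 (fun k => s a * s k) ht (fun k => r k a) L.reverse
      (fun k _ => ⟨hr0 _ _, hr1 _ _⟩) hanti [] (by simp) (by simp) (by simpa using hL)
    simpa only [List.prod_nil, one_mul, List.map_reverse, List.prod_reverse] using this
  rcases R with _ | ⟨b, R⟩
  · rw [pairProd_remove_one]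
    have hlen : L.length = n - 1 := by simp at hln; lia
    have hn : n - 1 < n := by simp at hln; lia
    have h1 := hleft 0 le_rfl zero_le_one
    have h2 := ih (n - 1) hn L hlen hLp
    have h3 : (L.map (fun k => 1 - (s k : ℝ) * s a * r k a)).prod ≤ 1 := by
      convert h1 using 4 with k
      push_cast
      ring
    calc _ ≤ pairProd (fun i j => 1 - s i * s j * r i j) L * 1 :=
          mul_le_mul_of_nonneg_left h3 (hnonneg L)
      _ ≤ 2 ^ ((n - 1) / 2) := by rwa [mul_one]
      _ ≤ 2 ^ (n / 2) := pow_le_pow_right₀ one_le_two (by lia)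
  · have hsb : s b = - s a := by
      have := hR [b] (by simp)
      rcases hs a with h | h <;> rcases hs b with h' | h' <;> simp [h, h'] at this ⊢
    have hsa2 : s a * s a = 1 := by rcases hs a with h | h <;> simp [h]
    rw [pairProd_remove_two]
    have hlen : (L ++ R).length = n - 2 := by simp at hln ⊢; lia
    have hn : n - 2 < n := by simp at hln; lia
    rw [List.pairwise_cons, List.pairwise_cons] at haR
    obtain ⟨hab, hbR, hRp⟩ := haR
    have hab' : a < b := hab b (by simp)
    have hLb : ∀ k ∈ L, k < a := fun k hk => hLaR k hk a (by simp)
    have h2 := ih (n - 2) hn (L ++ R) hlen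
      (List.pairwise_append.2 ⟨hLp, hRp, fun i hi j hj => hLaR i hi j (by simp [hj])⟩)
    have hx0 := hr0 a b
    have hx1 := hr1 a b
    have h3 : (L.map (fun k => (1 - (s k : ℝ) * s a * r k a) *
        (1 - (s k : ℝ) * s b * r k b))).prod ≤ 1 := by
      convert hleft _ hx0 hx1 using 2
      refine List.map_congr_left fun k hk => ?_
      rw [hr k a b (hLb k hk) hab', hsb]
      push_cast
      ring
    have h4 := ballot_weights_le_one hx0 hx1 (fun k => - (s a * s k))
      (fun k => by rcases ht k with h | h <;> simp [h]) (fun k => r b k) R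
      (fun k _ => ⟨hr0 _ _, hr1 _ _⟩)
      (by
        refine (List.Pairwise.and_mem.1 hRp).imp ?_
        rintro i j ⟨hi, hj, hij⟩
        rw [hr b i j (hbR i hi) hij]
        exact mul_le_of_le_one_right (hr0 _ _) (hr1 _ _)) [(1 + r a b) / 2]
      (by
        simp only [List.mem_singleton, forall_eq]
        constructor <;> linarith)
      (by
        simp only [List.mem_singleton, forall_eq]
        intro k _
        have := three_factor_le_two hx0 hx1 (hr0 b k) (hr1 b k)
        linarith)
      (by
        intro p hp
        have := hR (b :: p) (by simpa using hp)
        simp only [List.map_cons, List.sum_cons, hsb, mul_neg, hsa2, List.sum_map_mul_left] at this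
        simp only [← neg_mul, List.sum_map_mul_left, List.length_singleton]
        push_cast
        linarith)
    have h5 : (1 - (s a : ℝ) * s b * r a b) * (R.map (fun k => (1 - (s a : ℝ) * s k * r a k) *
        (1 - (s b : ℝ) * s k * r b k))).prod ≤ 2 := by
      have e : R.map (fun k => (1 - (s a : ℝ) * s k * r a k) * (1 - (s b : ℝ) * s k * r b k)) =
          R.map (fun k => (1 - (-(s a * s k) : ℤ) * r b k) *
            (1 + (-(s a * s k) : ℤ) * (r b k * r a b))) := by
        refine List.map_congr_left fun k hk => ?_
        rw [hr a b k hab' (hbR k hk), hsb]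
        push_cast
        ring
      have e2 : (1 - (s a : ℝ) * s b * r a b) = 1 + r a b := by
        have : (s a : ℝ) * s a = 1 := by exact_mod_cast hsa2
        rw [hsb]
        push_cast
        linear_combination r a b * this
      rw [e, e2]
      simp only [List.prod_singleton] at h4
      linarith
    have hf := sign_factor_nonneg hs hr1 hr0
    calc _ ≤ (pairProd (fun i j => 1 - s i * s j * r i j) (L ++ R) * 1) * 2 := by
          refine mul_le_mul (mul_le_mul_of_nonneg_left h3 (hnonneg _)) h5 ?_
            (by simpa using hnonneg _)
          refine mul_nonneg (hf _ _) (List.prod_nonneg fun y hy => ?_)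
          obtain ⟨k, -, rfl⟩ := List.mem_map.1 hy
          exact mul_nonneg (hf _ _) (hf _ _)
      _ ≤ 2 ^ ((n - 2) / 2) * 2 := by
          rw [mul_one]
          exact mul_le_mul_of_nonneg_right h2 zero_le_two
      _ = 2 ^ (n / 2) := by
          rw [← pow_succ]
          congr 1
          simp at hln
          lia

end

lemma pairProd_range_succ (f : ℕ → ℕ → ℝ) (m : ℕ) :
    pairProd f (List.range (m + 1)) = ∏ j ∈ range m, ∏ i ∈ range (j + 1), f i (j + 1) := by
  induction m with
  | zero => simp [pairProd]
  | succ m ih =>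
    rw [List.range_succ, pairProd_remove_one, ih, prod_range_succ]
    congr 1

lemma Q_eq_prod_range (m : ℕ) (X : ℕ → ℝ) :
    Q m (fun i => X i) = ∏ j ∈ range m, ∏ i ∈ range (j + 1), (1 - ∏ k ∈ Ico i (j + 1), X k) := by
  rw [Q, prod_filter, ← univ_product_univ, prod_product_right, ← Fin.prod_univ_eq_prod_range]
  refine prod_congr rfl fun j _ => ?_
  have h : ∀ i : Fin m, ∏ k ∈ Icc i j, X k = ∏ k ∈ Ico (i : ℕ) (j + 1), X k := by
    intro i
    have : Ico (i : ℕ) (j + 1) = (Icc i j).map Fin.valEmbedding := by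
      rw [Fin.map_valEmbedding_Icc]
      ext
      simp
    rw [this, prod_map]
    rfl
  simp only [h, Fin.le_def]
  rw [Fin.prod_univ_eq_prod_range
    (fun i => if i ≤ (j : ℕ) then 1 - ∏ k ∈ Ico i ((j : ℕ) + 1), X k else 1), ← prod_filter]
  refine prod_congr ?_ fun _ _ => rfl
  ext i
  simp
  lia

lemma Q_le (m : ℕ) (X : ℕ → ℝ) (hX : ∀ k, |X k| ≤ 1) :
    Q m (fun i => X i) ≤ 2 ^ ((m + 1) / 2) := by
  set e : ℕ → ℤ := fun k => if 0 ≤ X k then 1 else -1 with he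
  have he1 : ∀ k, e k = 1 ∨ e k = -1 := fun k => by
    by_cases h : 0 ≤ X k <;> simp [he, h]
  have heX : ∀ k, X k = e k * |X k| := fun k => by
    by_cases h : 0 ≤ X k
    · simp [he, h, abs_of_nonneg h]
    · simp [he, h, abs_of_neg (not_le.1 h)]
  set s : ℕ → ℤ := fun i => ∏ k ∈ range i, e k with hsdef
  have hs : ∀ i, s i = 1 ∨ s i = -1 := by
    intro i
    induction i with
    | zero => simp [hsdef]
    | succ i ih =>
      have : s (i + 1) = s i * e i := prod_range_succ _ _
      rcases ih with h | h <;> rcases he1 i with h' | h' <;> simp [this, h, h']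
  have key := pairProd_sign_le (s := s) (r := fun i j => ∏ k ∈ Ico i j, |X k|) hs
    (fun i j => prod_le_one (fun _ _ => abs_nonneg _) (fun k _ => hX k))
    (fun i j => prod_nonneg fun _ _ => abs_nonneg _)
    (fun i j k hij hjk => (prod_Ico_consecutive _ hij.le hjk.le).symm)
    (m + 1) (List.range (m + 1)) (by simp) List.pairwise_lt_range
  rw [pairProd_range_succ] at key
  rw [Q_eq_prod_range]
  convert key using 5 with j hj i hi
  have hij : i ≤ j + 1 := (mem_range.1 hi).le
  have h1 : s (j + 1) = s i * ∏ k ∈ Ico i (j + 1), e k := (prod_range_mul_prod_Ico _ hij).symm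
  have h2 : s i * s i = 1 := by rcases hs i with h | h <;> simp [h]
  rw [h1, prod_congr rfl fun k _ => heX k, prod_mul_distrib]
  have h3 : (s i : ℝ) * s i = 1 := by exact_mod_cast h2
  push_cast
  linear_combination (-(∏ k ∈ Ico i (j + 1), (e k : ℝ)) * ∏ k ∈ Ico i (j + 1), |X k|) * h3

lemma Q_alternating (m : ℕ) :
    Q m (fun i => if (i : ℕ) % 2 = 0 then -1 else 0) = 2 ^ ((m + 1) / 2) := by
  rw [Q_eq_prod_range m (fun k => if k % 2 = 0 then -1 else 0)]
  have h : ∀ j, ∏ i ∈ range (j + 1),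
      (1 - ∏ k ∈ Ico i (j + 1), (if k % 2 = 0 then (-1 : ℝ) else 0)) =
        if j % 2 = 0 then 2 else 1 := by
    intro j
    rw [prod_range_succ, prod_eq_one]
    · split_ifs with hj <;> simp [hj]
      norm_num
    · intro i hi
      rw [mem_range] at hi
      rw [sub_eq_self]
      by_cases hi2 : i % 2 = 0
      · exact prod_eq_zero (i := i + 1) (by simp; lia) (if_neg (by lia))
      · exact prod_eq_zero (i := i) (by simp; lia) (if_neg hi2)
  simp only [h]
  induction m with
  | zero => simp
  | succ m ih =>
    rw [prod_range_succ, ih]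
    split_ifs with hm
    · rw [← pow_succ]
      congr 1
      lia
    · rw [mul_one]
      congr 1
      lia

theorem Q_max :
    ∀ n : ℕ, 2 ≤ n →
      (∀ x : Fin (n - 1) → ℝ, (∀ i, x i ∈ Set.Icc (-1 : ℝ) 1) →
        Q (n - 1) x ≤ 2 ^ (n / 2)) ∧
      Q (n - 1) (fun i => if (i : ℕ) % 2 = 0 then -1 else 0) = 2 ^ (n / 2) := by
  intro n hn
  obtain ⟨m, rfl⟩ : ∃ m, n = m + 1 := ⟨n - 1, by lia⟩
  refine ⟨fun x hx => ?_, Q_alternating m⟩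
  have := Q_le m (fun k => if h : k < m then x ⟨k, h⟩ else 0) (fun k => by
    split_ifs with h
    · exact abs_le.2 (hx ⟨k, h⟩)
    · simp)
  simpa using this
end

section
/- For all x, y, z, g ∈ [0,1], one has (1 + xy)(1 − 2xyzg + (xyz)²)(1 − y)(1 + 2yzg + (yz)²) ≤ 32/27. -/
/-- On `[0, w]` the cubic `(1 + u) (1 - 2 g u + u ^ 2)` is bounded by its values at the endpoints. -/
theorem cubic_le_endpoints {u w g : ℝ} (hu : 0 ≤ u) (huw : u ≤ w) :
    (1 + u) * (1 - 2 * u * g + u ^ 2) ≤ 1 ∨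
      (1 + u) * (1 - 2 * u * g + u ^ 2) ≤ (1 + w) * (1 - 2 * w * g + w ^ 2) := by
  have hw : 0 ≤ w := hu.trans huw
  rcases le_or_gt (u ^ 2 + (1 - 2 * g) * (u + 1)) 0 with h | h
  · left
    nlinarith [mul_nonneg hu (neg_nonneg.2 h)]
  · right
    have key : u ^ 2 + (1 - 2 * g) * (u + 1) ≤ w ^ 2 + (1 - 2 * g) * (w + 1) := by
      have hfac : 0 ≤ u + w + (1 - 2 * g) := by
        by_contra! hneg
        nlinarith [mul_nonneg hu hw, mul_nonneg hu hu]
      nlinarith [mul_nonneg (sub_nonneg.2 huw) hfac]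
    have := mul_le_mul huw key h.le hw
    nlinarith

theorem one_sub_mul_one_add_sq_le {t : ℝ} (ht : 0 ≤ t) : (1 - t) * (1 + t) ^ 2 ≤ 32 / 27 := by
  nlinarith [mul_nonneg (by linarith : 0 ≤ t + 5 / 3) (sq_nonneg (t - 1 / 3))]

theorem static_estimate_square_32_27 :
    ∀ x y z g : ℝ, x ∈ Set.Icc (0 : ℝ) 1 → y ∈ Set.Icc (0 : ℝ) 1 →
      z ∈ Set.Icc (0 : ℝ) 1 → g ∈ Set.Icc (0 : ℝ) 1 →
      (1 + x * y) * (1 - 2 * x * y * z * g + (x * y * z) ^ 2) *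
        (1 - y) * (1 + 2 * y * z * g + (y * z) ^ 2) ≤ 32 / 27 := by
  rintro x y z g ⟨hx0, hx1⟩ ⟨hy0, hy1⟩ ⟨hz0, hz1⟩ ⟨hg0, hg1⟩
  obtain ⟨w, hw⟩ : ∃ w, w = y * z := ⟨_, rfl⟩
  have hw0 : 0 ≤ w := hw ▸ mul_nonneg hy0 hz0
  have hwy : w ≤ y := hw ▸ mul_le_of_le_one_right hy0 hz1
  have hw1 : w ≤ 1 := hwy.trans hy1
  have hu0 : 0 ≤ x * w := mul_nonneg hx0 hw0
  have huw : x * w ≤ w := mul_le_of_le_one_left hw0 hx1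
  have hwg : 0 ≤ w * g := mul_nonneg hw0 hg0
  have hA : 0 ≤ 1 - 2 * (x * w) * g + (x * w) ^ 2 := by
    nlinarith [sq_nonneg (1 - x * w), mul_nonneg hu0 (sub_nonneg.2 hg1)]
  have hB : 0 ≤ 1 + 2 * (w * g) + w ^ 2 := by positivity
  have hyw : (1 + x * y) * (1 - y) ≤ (1 + x * w) * (1 - w) := by
    nlinarith [mul_nonneg (sub_nonneg.2 hwy) (sub_nonneg.2 hx1),
      mul_nonneg (sub_nonneg.2 hwy) (mul_nonneg hx0 (add_nonneg hy0 hw0))]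
  have hC : 0 ≤ (1 - w) * (1 + 2 * (w * g) + w ^ 2) := mul_nonneg (sub_nonneg.2 hw1) hB
  calc (1 + x * y) * (1 - 2 * x * y * z * g + (x * y * z) ^ 2) *
        (1 - y) * (1 + 2 * y * z * g + (y * z) ^ 2)
      = (1 + x * y) * (1 - y) *
          ((1 - 2 * (x * w) * g + (x * w) ^ 2) * (1 + 2 * (w * g) + w ^ 2)) := by
        rw [hw]; ring
    _ ≤ (1 + x * w) * (1 - w) *
          ((1 - 2 * (x * w) * g + (x * w) ^ 2) * (1 + 2 * (w * g) + w ^ 2)) :=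
        mul_le_mul_of_nonneg_right hyw (mul_nonneg hA hB)
    _ = (1 + x * w) * (1 - 2 * (x * w) * g + (x * w) ^ 2) *
          ((1 - w) * (1 + 2 * (w * g) + w ^ 2)) := by ring
    _ ≤ 32 / 27 := by
        rcases cubic_le_endpoints (g := g) hu0 huw with h | h
        · calc _ ≤ 1 * ((1 - w) * (1 + 2 * (w * g) + w ^ 2)) :=
                mul_le_mul_of_nonneg_right h hC
            _ ≤ (1 - w) * (1 + w) ^ 2 := by
                rw [one_mul]
                refine mul_le_mul_of_nonneg_left ?_ (sub_nonneg.2 hw1)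
                nlinarith [mul_le_of_le_one_right hw0 hg1]
            _ ≤ 32 / 27 := one_sub_mul_one_add_sq_le hw0
        · calc _ ≤ (1 + w) * (1 - 2 * w * g + w ^ 2) *
                  ((1 - w) * (1 + 2 * (w * g) + w ^ 2)) :=
                mul_le_mul_of_nonneg_right h hC
            _ = (1 - w ^ 2) * ((1 + w ^ 2) ^ 2 - (2 * (w * g)) ^ 2) := by ring
            _ ≤ (1 - w ^ 2) * (1 + w ^ 2) ^ 2 :=
                mul_le_mul_of_nonneg_left (sub_le_self _ (sq_nonneg _)) (by nlinarith)
            _ ≤ 32 / 27 := one_sub_mul_one_add_sq_le (sq_nonneg w)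
end
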